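/- arXiv:2506.16253 — 2 statements merged into one kernel-verified Lean document; each statement's English description precedes it below -/
import Mathlib

section
/- For every integer K ≥ 1 there exists a real number β such that β is the largest real root of the K-th probabilist's Hermite polynomial He_K (He_K(β) = 0 and every real root of He_K is ≤ β), and the sequence T ↦ (V T 0 − T)/√T, indexed by natural numbers T, converges to β as T → ∞. -/
open scoped BigOperators

noncomputable section

def simplex (K : ℕ) : Set (Fin K → ℝ) :=
  {q | (∀ k, 0 ≤ q k) ∧ ∑ k, q k = 1}

def simplexInt (K : ℕ) : Set (Fin K → ℝ) :=
  {r | (∀ k, 0 < r k) ∧ ∑ k, r k = 1}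

noncomputable def V (K : ℕ) : ℕ → (Fin K → ℝ) → ℝ
  | 0, s => ⨆ k, s k
  | H + 1, s =>
      sInf ((fun r : Fin K → ℝ =>
        sSup ((fun q : Fin K → ℝ => V K H (fun k => s k + q k / r k)) '' simplex K))
        '' simplexInt K)

/-- The `K`-th probabilist's Hermite polynomial, evaluated at a real `x`. -/
noncomputable def He (K : ℕ) (x : ℝ) : ℝ := Polynomial.aeval x (Polynomial.hermite K)

open Polynomial Filter Topology

/-! ### One round of the game -/

/-- The value before a betting round, when `f` is the value after it. -/
def bettingStep {K : ℕ} (f : (Fin K → ℝ) → ℝ) (s : Fin K → ℝ) : ℝ :=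
  sInf ((fun r : Fin K → ℝ =>
    sSup ((fun q : Fin K → ℝ => f (fun k => s k + q k / r k)) '' simplex K))
    '' simplexInt K)

/-- The properties of a value function which are preserved by `bettingStep`. -/
structure IsRegularValue {K : ℕ} (f : (Fin K → ℝ) → ℝ) : Prop where
  mono : Monotone f
  map_add_const : ∀ (s : Fin K → ℝ) (c : ℝ), f (fun k => s k + c) = f s + c
  coord_le : ∀ (s : Fin K → ℝ) (k : Fin K), s k ≤ f s
  convex : ConvexOn ℝ Set.univ f

theorem single_mem_simplex {K : ℕ} (k : Fin K) : Pi.single k (1 : ℝ) ∈ simplex K := by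
  refine ⟨fun j => ?_, by simp⟩
  rw [Pi.single_apply]
  split_ifs <;> norm_num

theorem simplex_nonempty (K : ℕ) [NeZero K] : (simplex K).Nonempty :=
  ⟨_, single_mem_simplex 0⟩

theorem simplexInt_nonempty (K : ℕ) [NeZero K] : (simplexInt K).Nonempty := by
  have hK : (0 : ℝ) < K := by exact_mod_cast Nat.pos_of_ne_zero (NeZero.ne K)
  exact ⟨fun _ => (K : ℝ)⁻¹, fun _ => inv_pos.2 hK, by simp [hK.ne']⟩

theorem simplex_coord_le_one {K : ℕ} {q : Fin K → ℝ} (hq : q ∈ simplex K) (k : Fin K) :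
    q k ≤ 1 := by
  rw [← hq.2]
  exact Finset.single_le_sum (fun j _ => hq.1 j) (Finset.mem_univ k)

theorem inv_convex_comb_le {x y a b : ℝ} (hx : 0 < x) (hy : 0 < y) (ha : 0 ≤ a) (hb : 0 ≤ b)
    (hab : a + b = 1) : (a * x + b * y)⁻¹ ≤ a * x⁻¹ + b * y⁻¹ := by
  have := (convexOn_zpow (𝕜 := ℝ) (-1)).2 hx hy ha hb hab
  simpa using this

namespace IsRegularValue

variable {K : ℕ} {f : (Fin K → ℝ) → ℝ}

theorem continuous (hf : IsRegularValue f) : Continuous f := by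
  refine (LipschitzWith.of_le_add fun x y => ?_).continuous
  rw [← hf.map_add_const]
  refine hf.mono fun k => ?_
  have := dist_le_pi_dist x y k
  rw [Real.dist_eq] at this
  linarith [le_abs_self (x k - y k)]

theorem le_of_single (hf : IsRegularValue f) (s : Fin K → ℝ) (k : Fin K) {a : ℝ} (ha : 0 ≤ a) :
    f (s + Pi.single k a) ≤ f s + a := by
  rw [← hf.map_add_const]
  refine hf.mono fun j => ?_
  rw [Pi.add_apply, Pi.single_apply]
  split_ifs <;> linarith

theorem bddAbove (hf : IsRegularValue f) (s : Fin K → ℝ) {r : Fin K → ℝ}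
    (hr : r ∈ simplexInt K) :
    BddAbove ((fun q : Fin K → ℝ => f (fun k => s k + q k / r k)) '' simplex K) := by
  refine ⟨f s + ∑ k, 1 / r k, ?_⟩
  rintro _ ⟨q, hq, rfl⟩
  rw [← hf.map_add_const]
  refine hf.mono fun k => ?_
  have h1 : q k / r k ≤ 1 / r k :=
    div_le_div_of_nonneg_right (simplex_coord_le_one hq k) (hr.1 k).le
  have h2 : 1 / r k ≤ ∑ k, 1 / r k :=
    Finset.single_le_sum (f := fun k => 1 / r k) (fun j _ => (one_div_pos.2 (hr.1 j)).le)
      (Finset.mem_univ k)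
  dsimp only
  linarith

theorem bddBelow [NeZero K] (hf : IsRegularValue f) (s : Fin K → ℝ) :
    BddBelow ((fun r : Fin K → ℝ =>
      sSup ((fun q : Fin K → ℝ => f (fun k => s k + q k / r k)) '' simplex K))
      '' simplexInt K) := by
  refine ⟨f s, ?_⟩
  rintro _ ⟨r, hr, rfl⟩
  obtain ⟨q, hq⟩ := simplex_nonempty K
  refine le_trans (hf.mono fun k => ?_) (le_csSup (hf.bddAbove s hr) ⟨q, hq, rfl⟩)
  exact le_add_of_nonneg_right (div_nonneg (hq.1 k) (hr.1 k).le)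

theorem bettingStep_le [NeZero K] (hf : IsRegularValue f) {s r : Fin K → ℝ} {L : ℝ}
    (hr : r ∈ simplexInt K)
    (h : ∀ q ∈ simplex K, f (fun k => s k + q k / r k) ≤ L) : bettingStep f s ≤ L := by
  refine (csInf_le (hf.bddBelow s) ⟨r, hr, rfl⟩).trans ?_
  refine csSup_le ((simplex_nonempty K).image _) ?_
  rintro _ ⟨q, hq, rfl⟩
  exact h q hq

theorem le_bettingStep [NeZero K] (hf : IsRegularValue f) {s : Fin K → ℝ} {L : ℝ}
    (h : ∀ r ∈ simplexInt K, ∃ q ∈ simplex K, L ≤ f (fun k => s k + q k / r k)) :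
    L ≤ bettingStep f s := by
  refine le_csInf ((simplexInt_nonempty K).image _) ?_
  rintro _ ⟨r, hr, rfl⟩
  obtain ⟨q, hq, hL⟩ := h r hr
  exact hL.trans (le_csSup (hf.bddAbove s hr) ⟨q, hq, rfl⟩)

theorem exists_of_bettingStep_lt [NeZero K] (hf : IsRegularValue f) {s : Fin K → ℝ} {L : ℝ}
    (h : bettingStep f s < L) :
    ∃ r ∈ simplexInt K, ∀ q ∈ simplex K, f (fun k => s k + q k / r k) ≤ L := by
  obtain ⟨_, ⟨r, hr, rfl⟩, hlt⟩ := exists_lt_of_csInf_lt ((simplexInt_nonempty K).image _) h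
  exact ⟨r, hr, fun q hq => (le_csSup (hf.bddAbove s hr) ⟨q, hq, rfl⟩).trans hlt.le⟩

theorem bettingStep_add_const_le [NeZero K] (hf : IsRegularValue f) (s : Fin K → ℝ) (c : ℝ) :
    bettingStep f (fun k => s k + c) ≤ bettingStep f s + c := by
  rw [← sub_le_iff_le_add]
  refine le_of_forall_gt_imp_ge_of_dense fun L hL => ?_
  obtain ⟨r, hr, h⟩ := hf.exists_of_bettingStep_lt hL
  rw [sub_le_iff_le_add]
  refine hf.bettingStep_le hr fun q hq => ?_
  have := hf.map_add_const (fun k => s k + q k / r k) c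
  simp only [add_right_comm _ c]
  linarith [h q hq]

theorem convexOn_bettingStep [NeZero K] (hf : IsRegularValue f) :
    ConvexOn ℝ Set.univ (bettingStep f) := by
  refine ⟨convex_univ, fun s _ t _ a b ha hb hab => ?_⟩
  refine le_of_forall_pos_le_add fun ε hε => ?_
  obtain ⟨r, hr, h⟩ := hf.exists_of_bettingStep_lt (lt_add_of_pos_right (bettingStep f s) hε)
  obtain ⟨u, hu, h'⟩ := hf.exists_of_bettingStep_lt (lt_add_of_pos_right (bettingStep f t) hε)
  have hpos : ∀ k, 0 < a * r k + b * u k := fun k => by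
    have := hr.1 k
    have := hu.1 k
    rcases ha.eq_or_lt with rfl | ha
    · have : b = 1 := by linarith
      subst this
      linarith
    · nlinarith [mul_pos ha (hr.1 k), mul_nonneg hb (hu.1 k).le]
  refine hf.bettingStep_le (r := fun k => a * r k + b * u k) ⟨hpos, ?_⟩ fun q hq => ?_
  · rw [Finset.sum_add_distrib, ← Finset.mul_sum, ← Finset.mul_sum, hr.2, hu.2]
    linarith
  · have hconv := hf.convex.2 (Set.mem_univ fun k => s k + q k / r k)
      (Set.mem_univ fun k => t k + q k / u k) ha hb hab
    have hle : f (fun k => (a • s + b • t) k + q k / (a * r k + b * u k)) ≤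
        f (a • (fun k => s k + q k / r k) + b • fun k => t k + q k / u k) := by
      refine hf.mono fun k => ?_
      have := mul_le_mul_of_nonneg_left
        (inv_convex_comb_le (hr.1 k) (hu.1 k) ha hb hab) (hq.1 k)
      simp only [Pi.add_apply, Pi.smul_apply, smul_eq_mul, div_eq_mul_inv]
      linarith
    simp only [smul_eq_mul] at hconv ⊢
    have h1 := mul_le_mul_of_nonneg_left (h q hq) ha
    have h2 := mul_le_mul_of_nonneg_left (h' q hq) hb
    have h3 : a * ε + b * ε = ε := by rw [← add_mul, hab, one_mul]
    linarith

theorem step [NeZero K] (hf : IsRegularValue f) : IsRegularValue (bettingStep f) where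
  mono s t hst := by
    refine le_of_forall_gt_imp_ge_of_dense fun L hL => ?_
    obtain ⟨r, hr, h⟩ := hf.exists_of_bettingStep_lt hL
    refine hf.bettingStep_le hr fun q hq => (hf.mono fun k => ?_).trans (h q hq)
    exact add_le_add_left (hst k) _
  map_add_const s c := by
    refine (hf.bettingStep_add_const_le s c).antisymm ?_
    have := hf.bettingStep_add_const_le (fun k => s k + c) (-c)
    simp only [add_neg_cancel_right] at this
    linarith
  coord_le s k := by
    refine hf.le_bettingStep fun r hr => ?_
    obtain ⟨q, hq⟩ := simplex_nonempty K
    exact ⟨q, hq, le_trans (le_add_of_nonneg_right (div_nonneg (hq.1 k) (hr.1 k).le))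
      (hf.coord_le (fun k => s k + q k / r k) k)⟩
  convex := hf.convexOn_bettingStep

end IsRegularValue

theorem isRegularValue_V_zero (K : ℕ) [NeZero K] : IsRegularValue (V K 0) := by
  have hle : ∀ (s : Fin K → ℝ) k, s k ≤ V K 0 s := fun s k =>
    le_ciSup (Set.finite_range s).bddAbove k
  have hsup : ∀ (s : Fin K → ℝ) L, (∀ k, s k ≤ L) → V K 0 s ≤ L := fun s L h => ciSup_le h
  have htrans : ∀ (s : Fin K → ℝ) c, V K 0 (fun k => s k + c) ≤ V K 0 s + c := fun s c =>
    hsup _ _ fun k => by linarith [hle s k]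
  refine ⟨fun s t hst => hsup _ _ fun k => (hst k).trans (hle t k),
    fun s c => (htrans s c).antisymm ?_, hle, convex_univ, fun s _ t _ a b ha hb _ => ?_⟩
  · have := htrans (fun k => s k + c) (-c)
    simp only [add_neg_cancel_right] at this
    linarith
  · refine hsup _ _ fun k => ?_
    exact add_le_add (mul_le_mul_of_nonneg_left (hle s k) ha)
      (mul_le_mul_of_nonneg_left (hle t k) hb)

theorem isRegularValue_V (K : ℕ) [NeZero K] (H : ℕ) : IsRegularValue (V K H) := by
  induction H with
  | zero => exact isRegularValue_V_zero K
  | succ H ih => exact ih.step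

/-! ### The value as the largest root of a polynomial -/

/-- `x` is a zero of `g`, and `g` is positive to the right of `x`. -/
def IsTopRoot (g : ℝ → ℝ) (x : ℝ) : Prop := g x = 0 ∧ ∀ y, x < y → 0 < g y

/-- The operator `1 - D` on real polynomials, where `D` is the derivative. -/
def subDeriv : Module.End ℝ ℝ[X] := 1 - derivative

theorem subDeriv_apply (p : ℝ[X]) : subDeriv p = p - derivative p := rfl

theorem subDeriv_pow_succ_apply (T : ℕ) (p : ℝ[X]) :
    (subDeriv ^ (T + 1)) p = (subDeriv ^ T) p - (subDeriv ^ T) (derivative p) := by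
  rw [pow_succ, Module.End.mul_apply, subDeriv_apply, map_sub]

theorem derivative_subDeriv_pow (T : ℕ) (p : ℝ[X]) :
    derivative ((subDeriv ^ T) p) = (subDeriv ^ T) (derivative p) := by
  have h : Commute (derivative : Module.End ℝ ℝ[X]) (subDeriv ^ T) :=
    ((Commute.one_right _).sub_right (Commute.refl _)).pow_right T
  exact congrArg (fun g : Module.End ℝ ℝ[X] => g p) h.eq

/-- The monic polynomial with roots `s k`. -/
def rootPoly {K : ℕ} (s : Fin K → ℝ) : ℝ[X] := ∏ k, (X - C (s k))

/-- The monic polynomial with roots `s j`, `j ≠ k`. -/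
def rootPolyErase {K : ℕ} (s : Fin K → ℝ) (k : Fin K) : ℝ[X] :=
  ∏ j ∈ Finset.univ.erase k, (X - C (s j))

theorem derivative_rootPoly {K : ℕ} (s : Fin K → ℝ) :
    derivative (rootPoly s) = ∑ k, rootPolyErase s k := by
  rw [rootPoly, derivative_prod_finset]
  simp [rootPolyErase]

theorem rootPoly_add_single {K : ℕ} (s : Fin K → ℝ) (k : Fin K) (a : ℝ) :
    rootPoly (s + Pi.single k a) = rootPoly s - a • rootPolyErase s k := by
  have h : ∏ j ∈ Finset.univ.erase k, (X - C ((s + Pi.single k a : Fin K → ℝ) j)) =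
      rootPolyErase s k := by
    refine Finset.prod_congr rfl fun j hj => ?_
    simp [Finset.ne_of_mem_erase hj]
  rw [rootPoly, rootPoly, ← Finset.mul_prod_erase _ _ (Finset.mem_univ k), h,
    ← Finset.mul_prod_erase _ (fun j => X - C (s j)) (Finset.mem_univ k), smul_eq_C_mul]
  simp only [Pi.add_apply, Pi.single_eq_same, map_add, rootPolyErase]
  ring

section Step

variable {K H : ℕ} {f : (Fin K → ℝ) → ℝ}

theorem exists_eq_of_single (hf : IsRegularValue f)
    (hroot : ∀ s, IsTopRoot (fun x => ((subDeriv ^ H) (rootPoly s)).eval x) (f s))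
    (s : Fin K → ℝ) {x : ℝ} (hx : f s < x) (k : Fin K) :
    ∃ a, 0 < a ∧ f (s + Pi.single k a) = x ∧
      ((subDeriv ^ H) (rootPolyErase s k)).eval x = ((subDeriv ^ H) (rootPoly s)).eval x * a⁻¹ := by
  have hcont : Continuous fun a : ℝ => f (s + Pi.single k a) :=
    hf.continuous.comp (continuous_const.add (continuous_single (A := fun _ => ℝ) k))
  have hxk : 0 ≤ x - s k := by linarith [hf.coord_le s k]
  obtain ⟨a, ⟨ha, -⟩, hax⟩ : x ∈ (fun a : ℝ => f (s + Pi.single k a)) '' Set.Icc 0 (x - s k) := by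
    refine intermediate_value_Icc hxk hcont.continuousOn ⟨by simpa using hx.le, ?_⟩
    have := hf.coord_le (s + Pi.single k (x - s k)) k
    rwa [Pi.add_apply, Pi.single_eq_same, add_sub_cancel] at this
  have hQ : 0 < ((subDeriv ^ H) (rootPoly s)).eval x := (hroot s).2 x hx
  have h0 := (hroot (s + Pi.single k a)).1
  dsimp only at hax h0
  rw [hax, rootPoly_add_single, map_sub, map_smul, eval_sub, eval_smul, smul_eq_mul] at h0
  have ha0 : a ≠ 0 := by
    rintro rfl
    linarith
  refine ⟨a, lt_of_le_of_ne ha ha0.symm, hax, ?_⟩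
  rw [eq_mul_inv_iff_mul_eq₀ ha0]
  linarith

theorem exists_equalizing (hf : IsRegularValue f)
    (hroot : ∀ s, IsTopRoot (fun x => ((subDeriv ^ H) (rootPoly s)).eval x) (f s))
    (s : Fin K → ℝ) {x : ℝ} (hx : f s < x) :
    ∃ a : Fin K → ℝ, (∀ k, 0 < a k) ∧ (∀ k, f (s + Pi.single k (a k)) = x) ∧
      ((subDeriv ^ (H + 1)) (rootPoly s)).eval x =
        ((subDeriv ^ H) (rootPoly s)).eval x * (1 - ∑ k, (a k)⁻¹) := by
  choose a ha hax hQ using exists_eq_of_single hf hroot s hx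
  refine ⟨a, ha, hax, ?_⟩
  rw [subDeriv_pow_succ_apply, derivative_rootPoly, map_sum, eval_sub, eval_finsetSum,
    Finset.sum_congr rfl fun k _ => hQ k, ← Finset.mul_sum]
  ring

/-- To the right of the top root of `p`, its derivative exceeds `p` somewhere. -/
theorem exists_eval_lt_derivative {p : ℝ[X]} {z : ℝ} (hp : IsTopRoot (fun x => p.eval x) z) :
    ∃ c ∈ Set.Ioo z (z + 1), p.eval c < (derivative p).eval c := by
  have hd : ∀ x, HasDerivAt (fun x => Real.exp (-x) * p.eval x)
      (Real.exp (-x) * ((derivative p).eval x - p.eval x)) x := fun x => by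
    have h1 : HasDerivAt (fun x : ℝ => Real.exp (-x)) (Real.exp (-x) * (-1)) x :=
      (hasDerivAt_neg x).exp
    exact (h1.mul (p.hasDerivAt x)).congr_deriv (by ring)
  obtain ⟨c, hc, hslope⟩ := exists_hasDerivAt_eq_slope _ _ (lt_add_one z)
    (fun x _ => (hd x).continuousAt.continuousWithinAt) fun x _ => hd x
  refine ⟨c, hc, ?_⟩
  have h0 : p.eval z = 0 := hp.1
  have hpos : 0 < p.eval (z + 1) := hp.2 _ (lt_add_one z)
  rw [h0, mul_zero, sub_zero, add_sub_cancel_left, div_one] at hslope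
  have := pos_of_mul_pos_right (hslope.symm ▸ mul_pos (Real.exp_pos _) hpos) (Real.exp_pos _).le
  linarith

theorem isTopRoot_bettingStep [NeZero K] (hf : IsRegularValue f)
    (hroot : ∀ s, IsTopRoot (fun x => ((subDeriv ^ H) (rootPoly s)).eval x) (f s))
    (s : Fin K → ℝ) :
    IsTopRoot (fun x => ((subDeriv ^ (H + 1)) (rootPoly s)).eval x) (bettingStep f s) := by
  have hK : (1 : ℝ) ≤ K := by exact_mod_cast NeZero.one_le
  obtain ⟨L, hL, hL0⟩ : ∃ L, f s < L ∧ ((subDeriv ^ (H + 1)) (rootPoly s)).eval L = 0 := by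
    obtain ⟨c, hc, hlt⟩ := exists_eval_lt_derivative (hroot s)
    have hcK : c ≤ f s + K := by linarith [hc.2]
    obtain ⟨L, hL, hL0⟩ : (0 : ℝ) ∈ (fun x => ((subDeriv ^ (H + 1)) (rootPoly s)).eval x) ''
        Set.Icc c (f s + K) := by
      refine intermediate_value_Icc hcK (Polynomial.continuous _).continuousOn ⟨?_, ?_⟩
      · rw [subDeriv_pow_succ_apply, ← derivative_subDeriv_pow, eval_sub]
        linarith
      · have hlt : f s < f s + K := by linarith
        obtain ⟨a, ha, hax, hQ⟩ := exists_equalizing hf hroot s hlt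
        have haK : ∀ k, (a k)⁻¹ ≤ (K : ℝ)⁻¹ := fun k => by
          refine inv_anti₀ (by linarith) ?_
          linarith [hf.le_of_single s k (ha k).le, hax k]
        have hsum : ∑ k, (a k)⁻¹ ≤ 1 := by
          refine (Finset.sum_le_sum fun k _ => haK k).trans_eq ?_
          simp [NeZero.ne K]
        rw [hQ]
        exact mul_nonneg ((hroot s).2 _ hlt).le (by linarith)
    exact ⟨L, hc.1.trans_le hL.1, hL0⟩
  obtain ⟨a, ha, hax, hQ⟩ := exists_equalizing hf hroot s hL
  have hsum : ∑ k, (a k)⁻¹ = 1 := by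
    rw [hL0] at hQ
    have := (mul_eq_zero.1 hQ.symm).resolve_left ((hroot s).2 _ hL).ne'
    linarith
  have hval : bettingStep f s = L := by
    refine le_antisymm ?_ ?_
    · refine hf.bettingStep_le (r := fun k => (a k)⁻¹) ⟨fun k => inv_pos.2 (ha k), hsum⟩
        fun q hq => ?_
      have hcomb : (fun k => s k + q k / (a k)⁻¹) =
          ∑ k, q k • (s + Pi.single k (a k)) := by
        simp only [smul_add, Finset.sum_add_distrib, ← Finset.sum_smul, hq.2, one_smul]
        ext j
        simp [Finset.sum_apply, Pi.single_apply]
      rw [hcomb]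
      refine (hf.convex.map_sum_le (fun k _ => hq.1 k) hq.2 fun k _ => Set.mem_univ _).trans ?_
      simp only [hax, smul_eq_mul, ← Finset.sum_mul, hq.2, one_mul, le_refl]
    · refine hf.le_bettingStep fun r hr => ?_
      obtain ⟨k, -, hk⟩ := Finset.exists_le_of_sum_le (s := Finset.univ) (f := r)
        (g := fun k => (a k)⁻¹) Finset.univ_nonempty (by rw [hr.2, hsum])
      refine ⟨Pi.single k 1, single_mem_simplex k, ?_⟩
      rw [← hax k]
      refine hf.mono fun j => ?_
      rcases eq_or_ne j k with rfl | hj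
      · simpa using (le_inv_comm₀ (ha j) (hr.1 j)).2 hk
      · simp [hj]
  rw [hval]
  refine ⟨hL0, fun y hy => ?_⟩
  obtain ⟨b, hb, hby, hQy⟩ := exists_equalizing hf hroot s (hL.trans hy)
  have hab : ∀ k, a k < b k := fun k => by
    by_contra! hle
    have : f (s + Pi.single k (b k)) ≤ f (s + Pi.single k (a k)) :=
      hf.mono (add_le_add_right (Pi.single_mono k hle) s)
    linarith [hax k, hby k]
  dsimp only
  rw [hQy]
  refine mul_pos ((hroot s).2 _ (hL.trans hy)) (sub_pos.2 ?_)
  rw [← hsum]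
  exact Finset.sum_lt_sum_of_nonempty Finset.univ_nonempty fun k _ => inv_strictAnti₀ (ha k) (hab k)

end Step

theorem isTopRoot_V (K : ℕ) [NeZero K] (H : ℕ) (s : Fin K → ℝ) :
    IsTopRoot (fun x => ((subDeriv ^ H) (rootPoly s)).eval x) (V K H s) := by
  induction H generalizing s with
  | zero =>
    refine ⟨?_, fun y hy => ?_⟩
    · obtain ⟨k, hk⟩ := exists_eq_ciSup_of_finite (f := s)
      have : V K 0 s = s k := hk.symm
      simp only [pow_zero, Module.End.one_apply, rootPoly, eval_prod, this]
      exact Finset.prod_eq_zero (Finset.mem_univ k) (by simp)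
    · simp only [pow_zero, Module.End.one_apply, rootPoly, eval_prod]
      refine Finset.prod_pos fun k _ => ?_
      have := (isRegularValue_V_zero K).coord_le s k
      simp only [eval_sub, eval_X, eval_C]
      linarith
  | succ H ih => exact isTopRoot_bettingStep (isRegularValue_V K H) ih s

/-! ### Asymptotics of the polynomials `(1 - D)^T X^n` -/

theorem derivative_subDeriv_pow_X_pow (T n : ℕ) :
    derivative ((subDeriv ^ T) (X ^ (n + 1))) = ((n : ℝ) + 1) • (subDeriv ^ T) (X ^ n) := by
  rw [derivative_subDeriv_pow, derivative_X_pow_succ, ← map_smul, smul_eq_C_mul]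

theorem subDeriv_pow_X (T : ℕ) : (subDeriv ^ T) (X : ℝ[X]) = X - C (T : ℝ) := by
  induction T with
  | zero => simp
  | succ T ih =>
    rw [pow_succ', Module.End.mul_apply, ih, subDeriv_apply]
    simp
    ring

theorem subDeriv_pow_one (T : ℕ) : (subDeriv ^ T) (1 : ℝ[X]) = 1 := by
  induction T with
  | zero => simp
  | succ T ih => rw [pow_succ', Module.End.mul_apply, ih, subDeriv_apply]; simp

theorem subDeriv_pow_X_pow_recurrence (T n : ℕ) :
    (subDeriv ^ T) (X ^ (n + 2) : ℝ[X]) =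
      (X + C (n + 1 - T : ℝ)) * (subDeriv ^ T) (X ^ (n + 1)) -
        C (n + 1 : ℝ) * X * (subDeriv ^ T) (X ^ n) := by
  induction T with
  | zero =>
    simp
    ring
  | succ T ih =>
    have hd := derivative_subDeriv_pow_X_pow T n
    rw [smul_eq_C_mul] at hd
    simp only [pow_succ' subDeriv, Module.End.mul_apply, ih]
    simp only [subDeriv_apply, derivative_mul, derivative_X,
      derivative_natCast, derivative_one, hd, Nat.cast_add, Nat.cast_one, map_add, map_sub,
      map_one, map_natCast]
    ring

/-- `(1 - D)^T X^n`, recentered at `T` and rescaled by `√T`. -/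
def rescaled (n : ℕ) (y : ℝ) (T : ℕ) : ℝ :=
  ((subDeriv ^ T) (X ^ n)).eval (T + √T * y) / √T ^ n

theorem rescaled_recurrence (n : ℕ) (y : ℝ) {T : ℕ} (hT : 0 < T) :
    rescaled (n + 2) y T = (y + (n + 1) * (√T)⁻¹) * rescaled (n + 1) y T -
      (n + 1) * (1 + y * (√T)⁻¹) * rescaled n y T := by
  have hs : 0 < √(T : ℝ) := Real.sqrt_pos.2 (by exact_mod_cast hT)
  have hsq : (T : ℝ) = √T ^ 2 := (Real.sq_sqrt (Nat.cast_nonneg T)).symm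
  simp only [rescaled, subDeriv_pow_X_pow_recurrence, eval_sub, eval_mul, eval_add, eval_X, eval_C]
  generalize eval (T + √T * y) ((subDeriv ^ T) (X ^ (n + 1))) = u
  generalize eval (T + √T * y) ((subDeriv ^ T) (X ^ n)) = v
  generalize √(T : ℝ) = r at *
  rw [hsq]
  field_simp
  ring

theorem He_zero (x : ℝ) : He 0 x = 1 := by simp [He]

theorem He_one (x : ℝ) : He 1 x = x := by simp [He]

theorem derivative_hermite_succ (n : ℕ) :
    derivative (hermite (n + 1)) = ((n : ℤ[X]) + 1) * hermite n := by
  induction n with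
  | zero => simp
  | succ n ih =>
    rw [hermite_succ (n + 1), derivative_sub, derivative_mul, ih]
    have hder : derivative (((n : ℤ[X]) + 1) * hermite n) =
        ((n : ℤ[X]) + 1) * derivative (hermite n) := by simp
    rw [hder]
    have := hermite_succ n
    push_cast
    simp only [derivative_X]
    linear_combination (-((n : ℤ[X]) + 1)) * this

theorem He_succ_succ (n : ℕ) (x : ℝ) :
    He (n + 2) x = x * He (n + 1) x - (n + 1) * He n x := by
  simp only [He]
  rw [hermite_succ (n + 1), derivative_hermite_succ]
  simp

theorem hasDerivAt_He (n : ℕ) (x : ℝ) : HasDerivAt (He (n + 1)) ((n + 1) * He n x) x := by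
  have h := (hermite (n + 1)).hasDerivAt_aeval x
  rw [derivative_hermite_succ] at h
  simp only [map_mul, map_add, map_natCast, map_one] at h
  exact h

theorem continuous_He (n : ℕ) : Continuous (He n) := (hermite n).continuous_aeval

theorem tendsto_He_atTop (n : ℕ) : Tendsto (He (n + 1)) atTop atTop := by
  have h : He (n + 1) = fun x => ((hermite (n + 1)).map (Int.castRingHom ℝ)).eval x := by
    ext x
    rw [He, eval_map]
    rfl
  have hm : ((hermite (n + 1)).map (Int.castRingHom ℝ)).Monic := (hermite_monic _).map _
  rw [h]
  refine tendsto_atTop_of_leadingCoeff_nonneg _ ?_ (by rw [hm.leadingCoeff]; exact zero_le_one)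
  rw [(hermite_monic _).degree_map, degree_hermite]
  exact_mod_cast n.succ_pos

theorem exists_isTopRoot_He (n : ℕ) :
    ∃ β, IsTopRoot (He (n + 1)) β ∧ ∀ j ≤ n, ∀ x, β ≤ x → 0 < He j x := by
  induction n with
  | zero =>
    refine ⟨0, ⟨by simp [He_one], fun y hy => by simpa [He_one] using hy⟩, fun j hj x _ => ?_⟩
    obtain rfl := Nat.le_zero.1 hj
    simp [He_zero]
  | succ n ih =>
    obtain ⟨β, hβ, hpos⟩ := ih
    have hneg : He (n + 2) β < 0 := by
      rw [He_succ_succ, hβ.1]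
      have := hpos n le_rfl β le_rfl
      have : 0 < ((n : ℝ) + 1) * He n β := by positivity
      linarith
    have hmono : StrictMonoOn (He (n + 2)) (Set.Ici β) := by
      refine strictMonoOn_of_deriv_pos (convex_Ici β) (continuous_He _).continuousOn fun x hx => ?_
      rw [interior_Ici] at hx
      rw [(hasDerivAt_He (n + 1) x).deriv]
      have := hβ.2 x hx
      positivity
    obtain ⟨M, hM, hβM⟩ := (((tendsto_He_atTop (n + 1)).eventually_ge_atTop 0).and
      (eventually_ge_atTop β)).exists
    obtain ⟨γ, hγ, hγ0⟩ := intermediate_value_Icc hβM (continuous_He (n + 2)).continuousOn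
      ⟨hneg.le, hM⟩
    have hβγ : β < γ := lt_of_le_of_ne hγ.1 fun h => by
      rw [h, hγ0] at hneg
      exact lt_irrefl _ hneg
    refine ⟨γ, ⟨hγ0, fun y hy => ?_⟩, fun j hj x hx => ?_⟩
    · rw [← hγ0]
      exact hmono hγ.1 (hγ.1.trans hy.le) hy
    · rcases Nat.le_succ_iff.1 hj with hj | rfl
      · exact hpos j hj x (hγ.1.trans hx)
      · exact hβ.2 x (hβγ.trans_le hx)

theorem tendsto_inv_sqrt_natCast : Tendsto (fun T : ℕ => (√(T : ℝ))⁻¹) atTop (𝓝 0) :=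
  tendsto_inv_atTop_zero.comp (Real.tendsto_sqrt_atTop.comp tendsto_natCast_atTop_atTop)

theorem tendsto_rescaled (n : ℕ) (y : ℝ) :
    Tendsto (rescaled n y) atTop (𝓝 (He n y)) := by
  induction n using Nat.twoStepInduction with
  | zero =>
    refine tendsto_const_nhds.congr fun T => ?_
    simp [rescaled, subDeriv_pow_one, He_zero]
  | one =>
    refine tendsto_const_nhds.congr' ?_
    filter_upwards [eventually_gt_atTop 0] with T hT
    have hs : √(T : ℝ) ≠ 0 := (Real.sqrt_pos.2 (by exact_mod_cast hT)).ne'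
    rw [rescaled, pow_one, pow_one, subDeriv_pow_X, He_one]
    simp [hs]
  | more n ih0 ih1 =>
    have hlim := (((tendsto_inv_sqrt_natCast.const_mul ((n : ℝ) + 1)).const_add y).mul ih1).sub
      ((((tendsto_inv_sqrt_natCast.const_mul y).const_add 1).const_mul ((n : ℝ) + 1)).mul ih0)
    rw [mul_zero, mul_zero, add_zero, add_zero, mul_one, ← He_succ_succ] at hlim
    refine hlim.congr' ?_
    filter_upwards [eventually_gt_atTop 0] with T hT
    exact (rescaled_recurrence n y hT).symm

theorem eval_subDeriv_pow_X_pow_pos {T n : ℕ} {z : ℝ}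
    (h : ∀ j ≤ n, 0 < ((subDeriv ^ T) (X ^ j : ℝ[X])).eval z) {x : ℝ} (hx : z ≤ x) :
    0 < ((subDeriv ^ T) (X ^ n : ℝ[X])).eval x := by
  induction n generalizing x with
  | zero => simp [subDeriv_pow_one]
  | succ n ih =>
    refine (h (n + 1) le_rfl).trans_le ?_
    refine monotoneOn_of_deriv_nonneg (convex_Ici z) (Polynomial.continuous _).continuousOn
      (Polynomial.differentiable _).differentiableOn (fun t ht => ?_) Set.self_mem_Ici hx hx
    rw [interior_Ici] at ht
    rw [Polynomial.deriv, derivative_subDeriv_pow_X_pow, eval_smul, smul_eq_mul]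
    exact mul_nonneg (by positivity) (ih (fun j hj => h j (hj.trans n.le_succ)) ht.le).le

theorem rootPoly_zero (K : ℕ) : rootPoly (0 : Fin K → ℝ) = X ^ K := by simp [rootPoly]

theorem exists_lt_neg_of_isTopRoot_He {n : ℕ} {β : ℝ} (hβ : He (n + 1) β = 0)
    (hpos : 0 < He n β) {a : ℝ} (ha : a < β) : ∃ x, a < x ∧ He (n + 1) x < 0 := by
  have hderiv : 0 < _root_.deriv (He (n + 1)) β := by
    rw [(hasDerivAt_He n β).deriv]
    positivity
  have hsign := (eventually_nhdsWithin_sign_eq_of_deriv_pos hderiv hβ).filter_mono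
    (nhdsWithin_le_nhds (s := Set.Iio β))
  obtain ⟨x, hx, hax, hxβ⟩ := (hsign.and (Ioo_mem_nhdsLT ha)).exists
  refine ⟨x, hax, ?_⟩
  rwa [sign_neg (sub_neg.2 hxβ), sign_eq_neg_one_iff] at hx

/-- The asymptotic regret factor `β_K = lim_T (V T 0 − T)/√T` exists and equals the
largest real root of the `K`-th probabilist's Hermite polynomial. -/
theorem asymptotic_regret_factor (K : ℕ) (hK : 1 ≤ K) :
    ∃ β : ℝ, (He K β = 0 ∧ ∀ x : ℝ, He K x = 0 → x ≤ β) ∧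
      Filter.Tendsto (fun T : ℕ => (V K T 0 - (T : ℝ)) / Real.sqrt T)
        Filter.atTop (nhds β) := by
  obtain ⟨n, rfl⟩ := Nat.exists_eq_add_of_le' hK
  obtain ⟨β, hβ, hpos⟩ := exists_isTopRoot_He n
  refine ⟨β, ⟨hβ.1, fun x hx => not_lt.1 fun h => (hβ.2 x h).ne' hx⟩, ?_⟩
  have hV : ∀ T, IsTopRoot (fun x => ((subDeriv ^ T) (X ^ (n + 1) : ℝ[X])).eval x)
      (V (n + 1) T 0) := fun T => by
    rw [← rootPoly_zero]
    exact isTopRoot_V (n + 1) T 0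
  refine tendsto_order.2 ⟨fun a ha => ?_, fun b hb => ?_⟩
  · obtain ⟨x, hax, hx⟩ := exists_lt_neg_of_isTopRoot_He hβ.1 (hpos n le_rfl β le_rfl) ha
    filter_upwards [eventually_gt_atTop 0, (tendsto_rescaled (n + 1) x).eventually_lt_const hx]
      with T hT hlt
    have hs : 0 < √(T : ℝ) := Real.sqrt_pos.2 (by exact_mod_cast hT)
    refine hax.trans_le ?_
    rw [le_div_iff₀ hs]
    by_contra! h
    exact hlt.not_ge (div_nonneg ((hV T).2 (T + √T * x) (by linarith)).le (by positivity))
  · have hposb : ∀ j ≤ n + 1, 0 < He j b := fun j hj => by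
      rcases Nat.le_succ_iff.1 hj with hj | rfl
      · exact hpos j hj b hb.le
      · exact hβ.2 b hb
    have hev : ∀ᶠ T in atTop, ∀ j ∈ Set.Iic (n + 1), 0 < rescaled j b T :=
      (eventually_all_finite (Set.finite_Iic (n + 1))).2 fun j hj =>
        (tendsto_rescaled j b).eventually_const_lt (hposb j hj)
    filter_upwards [eventually_gt_atTop 0, hev] with T hT hj
    have hs : 0 < √(T : ℝ) := Real.sqrt_pos.2 (by exact_mod_cast hT)
    rw [div_lt_iff₀ hs]
    by_contra! h
    refine (eval_subDeriv_pow_X_pow_pos (n := n + 1) (z := T + √T * b) (x := V (n + 1) T 0)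
      (fun j hjn => ?_) (by linarith)).ne' (hV T).1
    exact (div_pos_iff_of_pos_right (pow_pos hs j)).1 (hj j hjn)
end
end

section
/- For all integers K ≥ 1, H ≥ 1 and every s : Fin K → ℝ, let v = (V H s)·𝟏 − s and define r : Fin K → ℝ by r k = D_{H−1,K−1}(v⁻ᵏ) / D_{H−1,K}(v). Then r ∈ Δ°_K (all coordinates are strictly positive and sum to 1), and for every k ∈ Fin K one has V (H−1) (s + (1/(r k))·e_k) = V H s. -/
open scoped BigOperators

noncomputable section

/-- Rising factorial `a^{(j)} = a (a+1) ⋯ (a+j-1)`. -/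
def rise (a : ℝ) (j : ℕ) : ℝ := ∏ i ∈ Finset.range j, (a + i)

/-- Elementary symmetric polynomial of degree `m` in the coordinates of `v`. -/
def esymm {K : ℕ} (m : ℕ) (v : Fin K → ℝ) : ℝ :=
  ∑ S ∈ Finset.univ.powersetCard m, ∏ k ∈ S, v k

/-- `D_{H,K}(v) = ∑_{m=0}^K (−H)^{(K−m)} σ_m(v)`. -/
def D (H K : ℕ) (v : Fin K → ℝ) : ℝ :=
  ∑ m ∈ Finset.range (K + 1), rise (-(H : ℝ)) (K - m) * esymm m v

namespace OptimalOdds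

open Polynomial

/-- The operator `p ↦ p - p'` on real polynomials. -/
def idSubDeriv : ℝ[X] →ₗ[ℝ] ℝ[X] := LinearMap.id - derivative

/-- The polynomial in `x` whose value is `D h K (x·𝟏 - s)`. -/
def oddsPoly {K : ℕ} (h : ℕ) (s : Fin K → ℝ) : ℝ[X] :=
  (idSubDeriv ^ h) (∏ k, (X - C (s k)))

/-- `x` is the largest root of `p`, and `p` is positive to the right of it. -/
def IsTopRoot (p : ℝ[X]) (x : ℝ) : Prop :=
  p.eval x = 0 ∧ ∀ y, x < y → 0 < p.eval y

lemma idSubDeriv_apply (p : ℝ[X]) : idSubDeriv p = p - derivative p := rfl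

lemma idSubDeriv_pow_succ (h : ℕ) (p : ℝ[X]) :
    (idSubDeriv ^ (h + 1)) p = (idSubDeriv ^ h) p - derivative ((idSubDeriv ^ h) p) := by
  rw [pow_succ', Module.End.mul_apply, idSubDeriv_apply]

lemma idSubDeriv_pow_derivative (h : ℕ) (p : ℝ[X]) :
    derivative ((idSubDeriv ^ h) p) = (idSubDeriv ^ h) (derivative p) := by
  induction h with
  | zero => rfl
  | succ h ih => rw [idSubDeriv_pow_succ, idSubDeriv_pow_succ, derivative_sub, ih]

lemma idSubDeriv_pow_taylor (h : ℕ) (x : ℝ) (p : ℝ[X]) :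
    (idSubDeriv ^ h) (p.comp (X + C x)) = ((idSubDeriv ^ h) p).comp (X + C x) := by
  induction h with
  | zero => rfl
  | succ h ih =>
    rw [idSubDeriv_pow_succ, idSubDeriv_pow_succ, ih, derivative_comp]
    simp

lemma idSubDeriv_pow_X_sub_C_mul (h : ℕ) (a : ℝ) (p : ℝ[X]) :
    (idSubDeriv ^ h) ((X - C a) * p) =
      (X - C a) * (idSubDeriv ^ h) p - C (h : ℝ) * (idSubDeriv ^ (h - 1)) p := by
  induction h with
  | zero => simp
  | succ h ih =>
    rw [idSubDeriv_pow_succ, ih]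
    rcases h with _ | h
    · simp [idSubDeriv_apply]
      ring
    · simp only [Nat.add_sub_cancel, idSubDeriv_pow_succ]
      simp only [derivative_sub, derivative_mul, derivative_X, derivative_C, derivative_natCast,
        map_natCast]
      push_cast
      ring

lemma monic_idSubDeriv_pow (h : ℕ) {p : ℝ[X]} (hp : p.Monic) :
    ((idSubDeriv ^ h) p).Monic := by
  induction h with
  | zero => simpa
  | succ h ih =>
    rw [idSubDeriv_pow_succ]
    exact ih.sub_of_left (degree_derivative_lt ih.ne_zero)

lemma im_mul_im_sum_inv_neg {z : ℂ} (hz : z.im ≠ 0) (m : Multiset ℂ) (hm : ∀ w ∈ m, w.im = 0) :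
    z.im * (m.map fun w => 1 / (z - w)).sum.im ≤ 0 ∧
      (m ≠ 0 → z.im * (m.map fun w => 1 / (z - w)).sum.im < 0) := by
  induction m using Multiset.induction with
  | empty => simp
  | cons a m ih =>
    have h1 := (ih fun w hw => hm w (Multiset.mem_cons_of_mem hw)).1
    have ha : a.im = 0 := hm a (Multiset.mem_cons_self a m)
    have hza : z - a ≠ 0 := fun h => hz (by simpa [ha] using congrArg Complex.im h)
    have h2 : z.im * (1 / (z - a)).im < 0 := by
      rw [one_div, Complex.inv_im, Complex.sub_im, ha, sub_zero, mul_div_assoc', mul_neg]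
      exact div_neg_of_neg_of_pos (neg_lt_zero.mpr (mul_self_pos.mpr hz))
        (Complex.normSq_pos.mpr hza)
    have h3 : z.im * ((a ::ₘ m).map fun w => 1 / (z - w)).sum.im < 0 := by
      rw [Multiset.map_cons, Multiset.sum_cons, Complex.add_im, mul_add]
      linarith
    exact ⟨h3.le, fun _ => h3⟩

lemma splits_sub_derivative {p : ℝ[X]} (hp : p.Splits) : (p - derivative p).Splits := by
  rcases eq_or_ne p 0 with rfl | hp0
  · simp
  refine Splits.of_splits_map Complex.ofRealHom (IsAlgClosed.splits _) fun z hz => ?_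
  by_contra hzr
  have real_root : ∀ w, (p.map Complex.ofRealHom).IsRoot w → w.im = 0 := fun w hw => by
    obtain ⟨x, rfl⟩ := hp.mem_range_of_isRoot hp0 hw
    simp
  have hzim : z.im ≠ 0 := fun h => hzr ⟨z.re, Complex.ext (by simp) (by simp [h])⟩
  have hpz : (p.map Complex.ofRealHom).eval z ≠ 0 := fun h => hzim (real_root z h)
  have hroot : (p.map Complex.ofRealHom).derivative.eval z = (p.map Complex.ofRealHom).eval z := by
    have := (mem_roots'.mp hz).2
    rw [IsRoot.def, Polynomial.map_sub, eval_sub, ← derivative_map, sub_eq_zero] at this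
    exact this.symm
  have hsum := (IsAlgClosed.splits (p.map Complex.ofRealHom)).eval_derivative_div_eval_of_ne_zero
    hpz
  rw [hroot, div_self hpz] at hsum
  have key := (im_mul_im_sum_inv_neg hzim (p.map Complex.ofRealHom).roots
    fun w hw => real_root w (mem_roots'.mp hw).2).2
  rw [← hsum] at key
  refine absurd (key ?_) (by simp)
  intro h0
  simp [h0] at hsum

lemma splits_idSubDeriv_pow (h : ℕ) {p : ℝ[X]} (hp : p.Splits) :
    ((idSubDeriv ^ h) p).Splits := by
  induction h with
  | zero => simpa
  | succ h ih => rw [idSubDeriv_pow_succ]; exact splits_sub_derivative ih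

/-- **Laguerre's inequality** for real-rooted polynomials. -/
lemma laguerre_inequality {p : ℝ[X]} (hp : p.Splits) (x : ℝ) :
    p.eval x * (derivative (derivative p)).eval x ≤ (derivative p).eval x ^ 2 := by
  obtain ⟨m, hm⟩ := splits_iff_exists_multiset.mp hp
  rw [hm]
  clear hm
  generalize p.leadingCoeff = c
  induction m using Multiset.induction with
  | empty => simp
  | cons a m ih =>
    rw [Multiset.map_cons, Multiset.prod_cons, mul_left_comm]
    generalize C c * (m.map fun a => X - C a).prod = q at ih ⊢
    simp only [derivative_mul, derivative_add, derivative_sub, derivative_X, derivative_C, eval_mul,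
      eval_add, eval_sub, eval_X, eval_C, eval_one, eval_zero]
    simp
    nlinarith [mul_nonneg (sq_nonneg (x - a)) (sub_nonneg.mpr ih), sq_nonneg (q.eval x)]

lemma splits_prod_X_sub_C {ι : Type*} [Fintype ι] (s : ι → ℝ) :
    (∏ k, (X - C (s k))).Splits :=
  Splits.prod fun _ _ => Splits.X_sub_C _

lemma monic_prod_X_sub_C {ι : Type*} [Fintype ι] (s : ι → ℝ) :
    (∏ k, (X - C (s k))).Monic :=
  monic_prod_of_monic _ _ fun _ _ => monic_X_sub_C _

lemma monic_oddsPoly {K : ℕ} (h : ℕ) (s : Fin K → ℝ) : (oddsPoly h s).Monic :=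
  monic_idSubDeriv_pow h (monic_prod_X_sub_C s)

lemma oddsPoly_succ {K : ℕ} (h : ℕ) (s : Fin K → ℝ) :
    oddsPoly (h + 1) s = oddsPoly h s - derivative (oddsPoly h s) :=
  idSubDeriv_pow_succ h _

lemma derivative_oddsPoly {K : ℕ} (h : ℕ) (s : Fin (K + 1) → ℝ) :
    derivative (oddsPoly h s) = ∑ k : Fin (K + 1), oddsPoly h (s ∘ k.succAbove) := by
  simp only [oddsPoly]
  rw [idSubDeriv_pow_derivative, derivative_prod_finset, map_sum]
  refine Finset.sum_congr rfl fun k _ => ?_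
  congr 1
  have h1 := Finset.mul_prod_erase Finset.univ (fun j => X - C (s j)) (Finset.mem_univ k)
  rw [Fin.prod_univ_succAbove _ k] at h1
  rw [mul_left_cancel₀ (X_sub_C_ne_zero (s k)) h1]
  simp

lemma oddsPoly_add_single {K : ℕ} (h : ℕ) (s : Fin (K + 1) → ℝ) (k : Fin (K + 1)) (t : ℝ) :
    oddsPoly h (fun j => s j + if j = k then t else 0) =
      oddsPoly h s - C t * oddsPoly h (s ∘ k.succAbove) := by
  simp only [oddsPoly, Fin.prod_univ_succAbove _ k, ← smul_eq_C_mul]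
  rw [← map_smul, ← map_sub]
  congr 1
  simp [smul_eq_C_mul]
  ring

/-- The Wronskian of `oddsPoly h s` and its `k`-th minor is bounded below. -/
lemma sq_le_wronskian_oddsPoly {K : ℕ} (h : ℕ) (s : Fin (K + 1) → ℝ) (k : Fin (K + 1)) (x : ℝ) :
    (oddsPoly h (s ∘ k.succAbove)).eval x ^ 2 ≤
      (derivative (oddsPoly h s)).eval x * (oddsPoly h (s ∘ k.succAbove)).eval x -
        (oddsPoly h s).eval x * (derivative (oddsPoly h (s ∘ k.succAbove))).eval x := by
  have e : oddsPoly h s = (X - C (s k)) * oddsPoly h (s ∘ k.succAbove) -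
      C (h : ℝ) * oddsPoly (h - 1) (s ∘ k.succAbove) := by
    simp only [oddsPoly, Fin.prod_univ_succAbove _ k]
    exact idSubDeriv_pow_X_sub_C_mul h _ _
  rw [e]
  rcases h with _ | h
  · simp
    nlinarith
  · have hl := laguerre_inequality
      (splits_idSubDeriv_pow h (splits_prod_X_sub_C (s ∘ k.succAbove))) x
    change (oddsPoly h _).eval x * (derivative (derivative (oddsPoly h _))).eval x ≤
      (derivative (oddsPoly h _)).eval x ^ 2 at hl
    simp only [Nat.add_sub_cancel, oddsPoly_succ]
    generalize oddsPoly h (s ∘ k.succAbove) = q at hl ⊢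
    simp only [derivative_mul, derivative_sub, derivative_X, derivative_C, eval_mul,
      eval_add, eval_sub, eval_X, eval_C, eval_one, eval_zero]
    have := mul_nonneg (by positivity : (0 : ℝ) ≤ ((h + 1 : ℕ) : ℝ)) (sub_nonneg.mpr hl)
    nlinarith

lemma rise_succ_right (a : ℝ) (j : ℕ) : rise a (j + 1) = rise a j * (a + j) :=
  Finset.prod_range_succ _ _

lemma rise_succ_left (a : ℝ) (j : ℕ) : rise a (j + 1) = a * rise (a + 1) j := by
  rw [rise, rise, Finset.prod_range_succ']
  rw [mul_comm]
  simp only [Nat.cast_zero, add_zero, Nat.cast_succ]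
  congr 1
  exact Finset.prod_congr rfl fun i _ => by ring

lemma eval_zero_idSubDeriv_pow_X_pow (h j : ℕ) :
    ((idSubDeriv ^ h) (X ^ j)).eval 0 = rise (-(h : ℝ)) j := by
  induction h generalizing j with
  | zero =>
    rcases j with _ | j
    · simp [rise]
    · simp [rise, Finset.prod_range_succ']
  | succ h ih =>
    rw [idSubDeriv_pow_succ, idSubDeriv_pow_derivative, eval_sub, ih]
    rcases j with _ | j
    · simp [rise]
    · rw [derivative_X_pow, ← smul_eq_C_mul, map_smul, eval_smul, Nat.add_sub_cancel, ih,
        rise_succ_left (-((h + 1 : ℕ) : ℝ)) j, rise_succ_right, smul_eq_mul]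
      push_cast
      rw [show -((h : ℝ) + 1) + 1 = -(h : ℝ) by ring]
      ring

/-- `D` is computed by `oddsPoly`. -/
lemma D_eq_eval_oddsPoly {K : ℕ} (h : ℕ) (s : Fin K → ℝ) (x : ℝ) :
    D h K (fun k => x - s k) = (oddsPoly h s).eval x := by
  have e1 : (oddsPoly h s).eval x = ((idSubDeriv ^ h) (∏ k, (X + C (x - s k)))).eval 0 := by
    have : (∏ k, (X + C (x - s k))) = (∏ k, (X - C (s k))).comp (X + C x) := by
      rw [prod_comp]
      refine Finset.prod_congr rfl fun k _ => ?_
      simp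
      ring
    rw [this, idSubDeriv_pow_taylor]
    simp [oddsPoly]
  have e2 := Multiset.prod_X_add_C_eq_sum_esymm
    ((Finset.univ : Finset (Fin K)).val.map fun k => x - s k)
  rw [Multiset.map_map] at e2
  change (∏ k, (X + C (x - s k))) = _ at e2
  rw [e1, e2, map_sum, eval_finsetSum, D]
  simp only [Multiset.card_map, Finset.card_val, Finset.card_univ, Fintype.card_fin,
    Finset.esymm_map_val]
  refine Finset.sum_congr rfl fun m _ => ?_
  rw [← smul_eq_C_mul, map_smul, eval_smul, eval_zero_idSubDeriv_pow_X_pow, smul_eq_mul, mul_comm]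
  rfl

lemma eventually_pos_of_monic {p : ℝ[X]} (hp : p.Monic) :
    ∀ᶠ x in Filter.atTop, 0 < p.eval x := by
  by_cases hd : 0 < p.degree
  · exact (tendsto_atTop_of_leadingCoeff_nonneg p hd
      (by rw [hp.leadingCoeff]; exact zero_le_one)).eventually_gt_atTop 0
  · rw [hp.degree_le_zero_iff_eq_one.mp (not_lt.mp hd)]
    simp

lemma hasDerivAt_eval_div {f g : ℝ[X]} {x : ℝ} (hf : f.eval x ≠ 0) :
    HasDerivAt (fun y => g.eval y / f.eval y)
      (((derivative g).eval x * f.eval x - g.eval x * (derivative f).eval x) / f.eval x ^ 2) x :=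
  (g.hasDerivAt x).div (f.hasDerivAt x) hf

lemma eval_pos_of_sq_le_wronskian {f g : ℝ[X]} {a : ℝ}
    (hf : ∀ y, a < y → 0 < f.eval y) (hg : g.Monic)
    (hw : ∀ y, g.eval y ^ 2 ≤
      (derivative f).eval y * g.eval y - f.eval y * (derivative g).eval y)
    {y : ℝ} (hy : a < y) : 0 < g.eval y := by
  have hanti : AntitoneOn (fun y => g.eval y / f.eval y) (Set.Ioi a) := by
    refine antitoneOn_of_deriv_nonpos (convex_Ioi a)
      (fun z hz => (hasDerivAt_eval_div (hf z hz).ne').continuousAt.continuousWithinAt)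
      (fun z hz => ?_) fun z hz => ?_
    all_goals rw [interior_Ioi] at hz
    · exact (hasDerivAt_eval_div (hf z hz).ne').differentiableAt.differentiableWithinAt
    · rw [(hasDerivAt_eval_div (hf z hz).ne').deriv]
      exact div_nonpos_of_nonpos_of_nonneg
        (by nlinarith [hw z, sq_nonneg (g.eval z)]) (sq_nonneg _)
  obtain ⟨z, hz, hyz⟩ :=
    ((eventually_pos_of_monic hg).and (Filter.eventually_ge_atTop y)).exists
  have h1 := hanti hy (lt_of_lt_of_le hy hyz) hyz
  have h2 : 0 < g.eval z / f.eval z := div_pos hz (hf z (lt_of_lt_of_le hy hyz))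
  exact (div_pos_iff_of_pos_right (hf y hy)).mp (h2.trans_le h1)

lemma strictAntiOn_of_sq_le_wronskian {f g : ℝ[X]} {a : ℝ}
    (hf : ∀ y, a < y → 0 < f.eval y) (hg : g.Monic)
    (hw : ∀ y, g.eval y ^ 2 ≤
      (derivative f).eval y * g.eval y - f.eval y * (derivative g).eval y) :
    StrictAntiOn (fun y => g.eval y / f.eval y) (Set.Ioi a) := by
  refine strictAntiOn_of_deriv_neg (convex_Ioi a)
    (fun z hz => (hasDerivAt_eval_div (hf z hz).ne').continuousAt.continuousWithinAt)
    fun z hz => ?_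
  rw [interior_Ioi] at hz
  rw [(hasDerivAt_eval_div (hf z hz).ne').deriv]
  have := pow_pos (eval_pos_of_sq_le_wronskian hf hg hw hz) 2
  exact div_neg_of_neg_of_pos (by nlinarith [hw z]) (pow_pos (hf z hz) 2)

lemma IsTopRoot.unique {p : ℝ[X]} {x y : ℝ} (hx : IsTopRoot p x) (hy : IsTopRoot p y) : x = y := by
  rcases lt_trichotomy x y with h | h | h
  · exact absurd hy.1 (hx.2 y h).ne'
  · exact h
  · exact absurd hx.1 (hy.2 x h).ne'

/-- If the logarithmic derivative of `f` decreases strictly beyond the top root of `f`, then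
`f - f'` has a top root, located strictly beyond the one of `f`. -/
lemma exists_isTopRoot_sub_derivative {f : ℝ[X]} {a : ℝ} (ha : IsTopRoot f a) (hm : f.Monic)
    (hanti : StrictAntiOn (fun y => (derivative f).eval y / f.eval y) (Set.Ioi a)) :
    ∃ x, a < x ∧ IsTopRoot (f - derivative f) x := by
  have h1 : ∃ b, a < b ∧ f.eval b < (derivative f).eval b := by
    by_contra! hcon
    have hd : ∀ z, HasDerivAt (fun y => Real.exp (-y) * f.eval y)
        (Real.exp (-z) * -1 * f.eval z + Real.exp (-z) * (derivative f).eval z) z := fun z =>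
      ((hasDerivAt_neg z).exp).mul (f.hasDerivAt z)
    have hA : AntitoneOn (fun y => Real.exp (-y) * f.eval y) (Set.Ici a) := by
      refine antitoneOn_of_deriv_nonpos (convex_Ici a)
        (fun z _ => (hd z).continuousAt.continuousWithinAt)
        (fun z _ => (hd z).differentiableAt.differentiableWithinAt) fun z hz => ?_
      rw [interior_Ici] at hz
      rw [(hd z).deriv]
      nlinarith [hcon z hz, Real.exp_pos (-z)]
    have h2 := hA (Set.self_mem_Ici (a := a)) (Set.mem_Ici.mpr (by linarith : a ≤ a + 1))
      (by linarith)
    simp only [ha.1, mul_zero] at h2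
    have h3 := mul_pos (Real.exp_pos (-(a + 1))) (ha.2 (a + 1) (by linarith))
    linarith
  obtain ⟨b, hab, hb⟩ := h1
  have hmon : (f - derivative f).Monic := hm.sub_of_left (degree_derivative_lt hm.ne_zero)
  obtain ⟨c, hc, hbc⟩ :=
    ((eventually_pos_of_monic hmon).and (Filter.eventually_ge_atTop b)).exists
  obtain ⟨x, hx, hx0⟩ := intermediate_value_Icc hbc (f - derivative f).continuous.continuousOn
    (show (0 : ℝ) ∈ Set.Icc _ _ from ⟨by rw [eval_sub]; linarith, hc.le⟩)
  have hax : a < x := lt_of_lt_of_le hab hx.1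
  refine ⟨x, hax, hx0, fun y hy => ?_⟩
  have hlt := hanti hax (hax.trans hy) hy
  have hfx := ha.2 x hax
  have hfy := ha.2 y (hax.trans hy)
  simp only [eval_sub] at hx0 ⊢
  have e : (derivative f).eval x / f.eval x = 1 := by
    rw [div_eq_one_iff_eq hfx.ne']; linarith
  simp only [e] at hlt
  rw [div_lt_one hfy] at hlt
  linarith

section ValueFunction

variable {K : ℕ}

lemma le_one_of_mem_simplex {q : Fin K → ℝ} (hq : q ∈ simplex K) (k : Fin K) : q k ≤ 1 := by
  rw [← hq.2]
  exact Finset.single_le_sum (fun i _ => hq.1 i) (Finset.mem_univ k)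

lemma single_mem_simplex (k : Fin K) : (fun j => if j = k then (1 : ℝ) else 0) ∈ simplex K :=
  ⟨fun j => by dsimp only; split_ifs <;> norm_num, by simp⟩

lemma simplexInt_nonempty (K : ℕ) : (simplexInt (K + 1)).Nonempty :=
  ⟨fun _ => 1 / (K + 1 : ℝ), fun _ => by positivity, by
    simp
    field_simp⟩

/-- The worst case over the simplex of the next value, for a fixed vector of odds. -/
def worstCase (W : (Fin K → ℝ) → ℝ) (s r : Fin K → ℝ) : ℝ :=
  sSup ((fun q : Fin K → ℝ => W (fun k => s k + q k / r k)) '' simplex K)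

lemma V_succ (H : ℕ) (s : Fin K → ℝ) : V K (H + 1) s = sInf (worstCase (V K H) s '' simplexInt K) :=
  rfl

lemma bddAbove_worstCase {W : (Fin K → ℝ) → ℝ} (hW : Monotone W) (s : Fin K → ℝ) {r : Fin K → ℝ}
    (hr : r ∈ simplexInt K) :
    BddAbove ((fun q : Fin K → ℝ => W (fun k => s k + q k / r k)) '' simplex K) := by
  refine ⟨W fun k => s k + 1 / r k, ?_⟩
  rintro _ ⟨q, hq, rfl⟩
  refine hW fun k => ?_
  have := hr.1 k
  have := le_one_of_mem_simplex hq k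
  dsimp only
  gcongr

lemma le_worstCase {W : (Fin K → ℝ) → ℝ} (hW : Monotone W) (s : Fin K → ℝ) {r q : Fin K → ℝ}
    (hr : r ∈ simplexInt K) (hq : q ∈ simplex K) :
    W (fun k => s k + q k / r k) ≤ worstCase W s r :=
  le_csSup (bddAbove_worstCase hW s hr) ⟨q, hq, rfl⟩

lemma worstCase_le {K : ℕ} {W : (Fin (K + 1) → ℝ) → ℝ} {s r : Fin (K + 1) → ℝ} {c : ℝ}
    (h : ∀ q ∈ simplex (K + 1), W (fun k => s k + q k / r k) ≤ c) : worstCase W s r ≤ c := by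
  refine csSup_le ⟨_, _, single_mem_simplex 0, rfl⟩ ?_
  rintro _ ⟨q, hq, rfl⟩
  exact h q hq

lemma V_properties (K H : ℕ) : Monotone (V (K + 1) H) ∧ (∀ s, s 0 ≤ V (K + 1) H s) ∧
    ConvexOn ℝ Set.univ (V (K + 1) H) := by
  induction H with
  | zero =>
    have hb : ∀ s : Fin (K + 1) → ℝ, BddAbove (Set.range s) := fun s =>
      (Set.finite_range s).bddAbove
    refine ⟨fun s t hst => ciSup_mono (hb t) hst, fun s => le_ciSup (hb s) 0, convex_univ,
      fun s _ t _ a b ha hb' _ => ciSup_le fun k => ?_⟩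
    have h1 := mul_le_mul_of_nonneg_left (le_ciSup (hb s) k) ha
    have h2 := mul_le_mul_of_nonneg_left (le_ciSup (hb t) k) hb'
    exact add_le_add h1 h2
  | succ H ih =>
    obtain ⟨hmono, hlb, -, hconv⟩ := ih
    have lower : ∀ s : Fin (K + 1) → ℝ, ∀ r ∈ simplexInt (K + 1),
        s 0 ≤ worstCase (V (K + 1) H) s r := fun s r hr => by
      refine le_trans ?_ (le_worstCase hmono s hr (single_mem_simplex 0))
      refine le_trans ?_ (hlb _)
      have := hr.1 0
      simp only [if_true]
      exact le_add_of_nonneg_right (by positivity)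
    have hbdd : ∀ s : Fin (K + 1) → ℝ,
        BddBelow (worstCase (V (K + 1) H) s '' simplexInt (K + 1)) := fun s =>
      ⟨s 0, by rintro _ ⟨r, hr, rfl⟩; exact lower s r hr⟩
    have hne : ∀ s : Fin (K + 1) → ℝ,
        (worstCase (V (K + 1) H) s '' simplexInt (K + 1)).Nonempty := fun s =>
      (simplexInt_nonempty K).image _
    refine ⟨fun s t hst => ?_, fun s => ?_, convex_univ, fun s _ t _ a b ha hb hab => ?_⟩
    · rw [V_succ, V_succ]
      refine le_csInf (hne t) ?_
      rintro _ ⟨r, hr, rfl⟩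
      refine (csInf_le (hbdd s) ⟨r, hr, rfl⟩).trans (worstCase_le fun q hq => ?_)
      refine le_trans (hmono fun k => ?_) (le_worstCase hmono t hr hq)
      exact add_le_add (hst k) le_rfl
    · rw [V_succ]
      refine le_csInf (hne s) ?_
      rintro _ ⟨r, hr, rfl⟩
      exact lower s r hr
    · refine le_of_forall_pos_le_add fun ε hε => ?_
      obtain ⟨_, ⟨r, hr, rfl⟩, h1⟩ := exists_lt_of_csInf_lt (hne s)
        (show sInf (worstCase (V (K + 1) H) s '' simplexInt (K + 1)) < V (K + 1) (H + 1) s + ε by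
          rw [V_succ]; linarith)
      obtain ⟨_, ⟨u, hu, rfl⟩, h2⟩ := exists_lt_of_csInf_lt (hne t)
        (show sInf (worstCase (V (K + 1) H) t '' simplexInt (K + 1)) < V (K + 1) (H + 1) t + ε by
          rw [V_succ]; linarith)
      have hpos : ∀ k, 0 < a * r k + b * u k := fun k => by
        have hr' := hr.1 k
        have hu' := hu.1 k
        rcases ha.eq_or_lt with rfl | ha'
        · have : b = 1 := by linarith
          simpa [this]
        · have := mul_pos ha' hr'
          have := mul_nonneg hb hu'.le
          linarith
      have hw : (fun k => a * r k + b * u k) ∈ simplexInt (K + 1) :=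
        ⟨hpos, by
          rw [Finset.sum_add_distrib, ← Finset.mul_sum, ← Finset.mul_sum, hr.2, hu.2]
          linarith⟩
      refine (csInf_le (hbdd _) ⟨_, hw, rfl⟩).trans ?_
      refine (worstCase_le (c := a * worstCase (V (K + 1) H) s r + b * worstCase (V (K + 1) H) t u)
        fun q hq => ?_).trans ?_
      · refine le_trans (hmono (b := a • (fun k => s k + q k / r k) + b • fun k => t k + q k / u k)
          fun k => ?_) ((hconv (Set.mem_univ _) (Set.mem_univ _) ha hb hab).trans ?_)
        · simp only [Pi.add_apply, Pi.smul_apply, smul_eq_mul]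
          have hinv : 1 / (a * r k + b * u k) ≤ a * (1 / r k) + b * (1 / u k) := by
            have := (convexOn_zpow (𝕜 := ℝ) (-1)).2 (Set.mem_Ioi.mpr (hr.1 k))
              (Set.mem_Ioi.mpr (hu.1 k)) ha hb hab
            simpa using this
          have := mul_le_mul_of_nonneg_left hinv (hq.1 k)
          rw [div_eq_mul_one_div (q k), div_eq_mul_one_div (q k) (r k),
            div_eq_mul_one_div (q k) (u k)]
          linarith
        · exact add_le_add (mul_le_mul_of_nonneg_left (le_worstCase hmono s hr hq) ha)
            (mul_le_mul_of_nonneg_left (le_worstCase hmono t hu hq) hb)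
      · have := mul_le_mul_of_nonneg_left h1.le ha
        have := mul_le_mul_of_nonneg_left h2.le hb
        simp only [smul_eq_mul]
        linear_combination this + mul_le_mul_of_nonneg_left h1.le ha + ε * hab

/-- If some odds `r` equalize the next value over all decisive bets, they are optimal. -/
lemma V_succ_eq_of_equalizing {K H : ℕ} {s r : Fin (K + 1) → ℝ} {x : ℝ}
    (hr : r ∈ simplexInt (K + 1))
    (heq : ∀ k, V (K + 1) H (fun j => s j + if j = k then 1 / r k else 0) = x) :
    V (K + 1) (H + 1) s = x := by
  obtain ⟨hmono, -, hconv⟩ := V_properties K H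
  have lower : ∀ u ∈ simplexInt (K + 1), x ≤ worstCase (V (K + 1) H) s u := fun u hu => by
    obtain ⟨k, -, hk⟩ := Finset.exists_le_of_sum_le (Finset.univ_nonempty (α := Fin (K + 1)))
      (hu.2.trans hr.2.symm).le
    refine le_trans ?_ (le_worstCase hmono s hu (single_mem_simplex k))
    rw [← heq k]
    refine hmono fun j => ?_
    dsimp only
    split_ifs with hj
    · subst hj
      have := hu.1 j
      gcongr
    · simp
  refine le_antisymm ?_ ?_
  · rw [V_succ]
    have hbdd : BddBelow (worstCase (V (K + 1) H) s '' simplexInt (K + 1)) :=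
      ⟨x, by rintro _ ⟨u, hu, rfl⟩; exact lower u hu⟩
    refine (csInf_le hbdd ⟨r, hr, rfl⟩).trans (worstCase_le fun q hq => ?_)
    have hJ := hconv.map_sum_le (t := Finset.univ) (w := q)
      (p := fun k j => s j + if j = k then 1 / r k else 0)
      (fun k _ => hq.1 k) hq.2 fun _ _ => Set.mem_univ _
    simp only [heq, smul_eq_mul, ← Finset.sum_mul, hq.2, one_mul] at hJ
    refine le_of_eq_of_le (congrArg _ (funext fun j => ?_)) hJ
    simp [mul_add, Finset.sum_add_distrib, ← Finset.sum_mul, hq.2, div_eq_mul_inv]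
  · rw [V_succ]
    refine le_csInf ((simplexInt_nonempty K).image _) ?_
    rintro _ ⟨u, hu, rfl⟩
    exact lower u hu

end ValueFunction

lemma isTopRoot_oddsPoly_zero {K : ℕ} (s : Fin (K + 1) → ℝ) :
    IsTopRoot (oddsPoly 0 s) (V (K + 1) 0 s) := by
  have e : ∀ x, (oddsPoly 0 s).eval x = ∏ k, (x - s k) := fun x => by
    simp [oddsPoly, eval_prod]
  have hb : BddAbove (Set.range s) := (Set.finite_range s).bddAbove
  obtain ⟨k, hk⟩ := exists_eq_ciSup_of_finite (f := s)
  refine ⟨?_, fun y hy => ?_⟩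
  · rw [e]
    exact Finset.prod_eq_zero (Finset.mem_univ k) (by rw [hk]; exact sub_self _)
  · rw [e]
    exact Finset.prod_pos fun k _ => sub_pos.mpr ((le_ciSup hb k).trans_lt hy)

/-- Beyond the top root of `oddsPoly (h + 1) s`, quotients of minors by `oddsPoly h s` are
smaller than their values at this root, which are admissible odds. -/
lemma exists_isTopRoot_oddsPoly_succ {K h : ℕ} {s : Fin (K + 1) → ℝ} {a : ℝ}
    (ha : IsTopRoot (oddsPoly h s) a) :
    ∃ x, IsTopRoot (oddsPoly (h + 1) s) x ∧
      (fun k : Fin (K + 1) => (oddsPoly h (s ∘ k.succAbove)).eval x / (oddsPoly h s).eval x) ∈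
        simplexInt (K + 1) ∧
      ∀ k : Fin (K + 1), IsTopRoot (oddsPoly h fun j => s j +
        if j = k then 1 / ((oddsPoly h (s ∘ k.succAbove)).eval x / (oddsPoly h s).eval x) else 0)
        x := by
  have hpos : ∀ k : Fin (K + 1), ∀ y, a < y → 0 < (oddsPoly h (s ∘ k.succAbove)).eval y :=
    fun k y hy => eval_pos_of_sq_le_wronskian ha.2 (monic_oddsPoly h _)
      (sq_le_wronskian_oddsPoly h s k) hy
  have hanti : ∀ k : Fin (K + 1), StrictAntiOn
      (fun y => (oddsPoly h (s ∘ k.succAbove)).eval y / (oddsPoly h s).eval y) (Set.Ioi a) :=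
    fun k => strictAntiOn_of_sq_le_wronskian ha.2 (monic_oddsPoly h _)
      (sq_le_wronskian_oddsPoly h s k)
  have hsum : ∀ y, (derivative (oddsPoly h s)).eval y / (oddsPoly h s).eval y =
      ∑ k : Fin (K + 1), (oddsPoly h (s ∘ k.succAbove)).eval y / (oddsPoly h s).eval y :=
    fun y => by rw [derivative_oddsPoly, eval_finsetSum, Finset.sum_div]
  obtain ⟨x, hax, hx⟩ := exists_isTopRoot_sub_derivative ha (monic_oddsPoly h s)
    fun y hy z hz hyz => by
      simp only [hsum]
      exact Finset.sum_lt_sum_of_nonempty Finset.univ_nonempty fun k _ => hanti k hy hz hyz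
  have hfx := ha.2 x hax
  refine ⟨x, by rwa [oddsPoly_succ], ⟨fun k => div_pos (hpos k x hax) hfx, ?_⟩, fun k => ?_⟩
  · have := hx.1
    rw [eval_sub, sub_eq_zero] at this
    rw [← hsum, ← this, div_self hfx.ne']
  · have hgx := hpos k x hax
    rw [oddsPoly_add_single, one_div_div]
    refine ⟨?_, fun y hy => ?_⟩
    · rw [eval_sub, eval_mul, eval_C, div_mul_cancel₀ _ hgx.ne', sub_self]
    · have h1 := hanti k hax (hax.trans hy) hy
      dsimp only at h1
      rw [div_lt_div_iff₀ (ha.2 y (hax.trans hy)) hfx] at h1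
      rw [eval_sub, eval_mul, eval_C, sub_pos, div_mul_eq_mul_div, div_lt_iff₀ hgx]
      linarith

lemma isTopRoot_oddsPoly {K : ℕ} (h : ℕ) (s : Fin (K + 1) → ℝ) :
    IsTopRoot (oddsPoly h s) (V (K + 1) h s) := by
  induction h generalizing s with
  | zero => exact isTopRoot_oddsPoly_zero s
  | succ h ih =>
    obtain ⟨x, hx, hr, heq⟩ := exists_isTopRoot_oddsPoly_succ (ih s)
    rwa [V_succ_eq_of_equalizing hr fun k => (ih _).unique (heq k)]

end OptimalOdds

/-- With `v = (V H s)·𝟏 − s` the residual loss vector, the odds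
`r k = D_{H−1,K−1}(v⁻ᵏ) / D_{H−1,K}(v)` form a point of the open simplex and
equalize the value function over all decisive bets. -/
theorem optimal_odds (K' H : ℕ) (hH : 1 ≤ H) (s : Fin (K' + 1) → ℝ)
    (v : Fin (K' + 1) → ℝ) (hv : v = fun k => V (K' + 1) H s - s k)
    (r : Fin (K' + 1) → ℝ)
    (hr : r = fun k => D (H - 1) K' (v ∘ k.succAbove) / D (H - 1) (K' + 1) v) :
    r ∈ simplexInt (K' + 1) ∧
      ∀ k : Fin (K' + 1),
        V (K' + 1) (H - 1) (fun j => s j + (if j = k then 1 / r k else 0)) =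
          V (K' + 1) H s := by
  obtain ⟨H, rfl⟩ : ∃ n, H = n + 1 := ⟨H - 1, by omega⟩
  simp only [Nat.add_sub_cancel] at hr ⊢
  obtain ⟨x, hx, hmem, heq⟩ :=
    OptimalOdds.exists_isTopRoot_oddsPoly_succ (OptimalOdds.isTopRoot_oddsPoly H s)
  obtain rfl : V (K' + 1) (H + 1) s = x := (OptimalOdds.isTopRoot_oddsPoly (H + 1) s).unique hx
  have hr' : r = fun k : Fin (K' + 1) =>
      (OptimalOdds.oddsPoly H (s ∘ k.succAbove)).eval (V (K' + 1) (H + 1) s) /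
        (OptimalOdds.oddsPoly H s).eval (V (K' + 1) (H + 1) s) := by
    simp only [hr, hv, ← OptimalOdds.D_eq_eval_oddsPoly]
    rfl
  subst hr'
  exact ⟨hmem, fun k => (OptimalOdds.isTopRoot_oddsPoly H _).unique (heq k)⟩
end
end
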